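/- arXiv:2109.13854 — 5 statements merged into one kernel-verified Lean document; each statement's English description precedes it below -/
import Mathlib

section
/- Let a < 0, α > 0, k₃ ≠ 0, and k₄ be reals, set c = √(a² + 1), and suppose k₃ e^{2ct} + 1 ≠ 0 on an interval I. Define x(t) = a + c − 2c/(k₃ e^{2ct} + 1) and p(t) = k₄·(k₃ e^{2ct} + 1)²/e^{2ct} + (1 + α)(k₃ e^{2ct} + 1)/(2c k₃ e^{2ct}). Then p satisfies ṗ(t) = 2 x(t) p(t) − 2a p(t) − 1 − α for all t ∈ I. -/
theorem stmt6 (a α k₃ k₄ : ℝ) (ha : a < 0) (hα : 0 < α) (hk₃ : k₃ ≠ 0)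
    (c : ℝ) (hc : c = Real.sqrt (a ^ 2 + 1))
    (I : Set ℝ) (hI : I.OrdConnected)
    (hden : ∀ t ∈ I, k₃ * Real.exp (2 * c * t) + 1 ≠ 0)
    (x p : ℝ → ℝ)
    (hx : x = fun t => a + c - 2 * c / (k₃ * Real.exp (2 * c * t) + 1))
    (hp : p = fun t => k₄ * (k₃ * Real.exp (2 * c * t) + 1) ^ 2 / Real.exp (2 * c * t)
      + (1 + α) * (k₃ * Real.exp (2 * c * t) + 1) / (2 * c * k₃ * Real.exp (2 * c * t))) :
    ∀ t ∈ I, HasDerivAt p (2 * x t * p t - 2 * a * p t - 1 - α) t := by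
  intro t ht
  have hD := hden t ht
  have hc0 : c ≠ 0 := by
    rw [hc]
    positivity
  have hE : Real.exp (2 * c * t) ≠ 0 := (Real.exp_pos _).ne'
  have h1 : HasDerivAt (fun t : ℝ => Real.exp (2 * c * t)) (Real.exp (2 * c * t) * (2 * c)) t := by
    have h := ((hasDerivAt_id t).const_mul (2 * c)).exp
    simpa using h
  have h2 : HasDerivAt (fun t : ℝ => k₃ * Real.exp (2 * c * t) + 1)
      (k₃ * (Real.exp (2 * c * t) * (2 * c))) t := (h1.const_mul k₃).add_const 1
  have h3 := ((h2.pow 2).const_mul k₄).div h1 hE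
  have h4 := (h2.const_mul (1 + α)).div (h1.const_mul (2 * c * k₃))
    (mul_ne_zero (mul_ne_zero (mul_ne_zero two_ne_zero hc0) hk₃) hE)
  have h5 := h3.add h4
  subst hx hp
  refine HasDerivAt.congr_deriv h5 ?_
  simp only [Pi.pow_apply]
  generalize Real.exp (2 * c * t) = E at *
  field_simp
  push_cast
  ring
end

section
/- Let a < 0 and α > 0 be reals with (a + √(a² + 1))² ≤ α ≤ 1/(4a²), and set u* = 2a/√α + 1/α. Then at the point (x, p) = (√α, √α) with control u = u*, both 2ax − x²u + 1 = 0 and 2xpu − 2ap − 1 − αu = 0 hold. Conversely, if x > 0, p ∈ ℝ, u ∈ [0,1] satisfy x·p = α, 2ax − x²u + 1 = 0, and 2xpu − 2ap − 1 − αu = 0, then x = √α, p = √α, and u = 2a/√α + 1/α. -/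
theorem stmt9 (a α : ℝ) (ha : a < 0) (hα : 0 < α)
    (hlo : (a + Real.sqrt (a ^ 2 + 1)) ^ 2 ≤ α) (hhi : α ≤ 1 / (4 * a ^ 2))
    (ustar : ℝ) (hustar : ustar = 2 * a / Real.sqrt α + 1 / α) :
    (2 * a * Real.sqrt α - (Real.sqrt α) ^ 2 * ustar + 1 = 0 ∧
      2 * Real.sqrt α * Real.sqrt α * ustar - 2 * a * Real.sqrt α - 1 - α * ustar = 0) ∧
    (∀ x p u : ℝ, 0 < x → u ∈ Set.Icc (0 : ℝ) 1 → x * p = α →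
      2 * a * x - x ^ 2 * u + 1 = 0 →
      2 * x * p * u - 2 * a * p - 1 - α * u = 0 →
      x = Real.sqrt α ∧ p = Real.sqrt α ∧ u = 2 * a / Real.sqrt α + 1 / α) := by
  have hs : 0 < Real.sqrt α := Real.sqrt_pos.mpr hα
  have hss : Real.sqrt α ^ 2 = α := Real.sq_sqrt hα.le
  have key : α * ustar = 2 * a * Real.sqrt α + 1 := by
    rw [hustar]
    generalize Real.sqrt α = s at hs hss
    subst hss
    field_simp
  refine ⟨⟨?_, ?_⟩, ?_⟩
  · rw [hss]; linarith
  · linear_combination key + 2 * ustar * hss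
  · intro x p u hx _ hxp h1 h2
    have hpx : p = x := by
      linear_combination p * h1 + x * h2 + x * u * hxp * (-1)
    subst hpx
    have hxs : p = Real.sqrt α := by
      rw [← hxp, Real.sqrt_mul_self hx.le]
    refine ⟨hxs, hxs, ?_⟩
    rw [← hxs, ← hxp]
    field_simp
    linarith
end

section
/- Let a < 0, α > 0, and t₁ ∈ ℝ be reals with 2a√α + 1 > 0. Define t'' = t₁ − ln(2a√α + 1)/(2a), and let (x, p) be the solution of ẋ = 2ax + 1, ṗ = −2ap − 1 with x(t'') = √α and p(t'') = √α. Then t'' < t₁, p(t₁) = 0, and x(t₁) = 2aα + 2√α. -/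
theorem lin_ode_aux (c d : ℝ) (y : ℝ → ℝ) (hy : ∀ t : ℝ, HasDerivAt y (c * y t + d) t)
    (s t : ℝ) : c * y t + d = (c * y s + d) * Real.exp (c * (t - s)) := by
  have hd : ∀ r : ℝ, HasDerivAt (fun r => (c * y r + d) * Real.exp (-(c * (r - s)))) 0 r := by
    intro r
    have h1 : HasDerivAt (fun r => c * y r + d) (c * (c * y r + d)) r :=
      ((hy r).const_mul c).add_const d
    have h2 : HasDerivAt (fun r => -(c * (r - s))) (-(c * 1)) r :=
      (((hasDerivAt_id r).sub_const s).const_mul c).neg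
    refine HasDerivAt.congr_deriv (h1.mul h2.exp) ?_
    ring
  have h := is_const_of_deriv_eq_zero (fun r => (hd r).differentiableAt)
    (fun r => (hd r).deriv) t s
  simp only [sub_self, mul_zero, neg_zero, Real.exp_zero, mul_one] at h
  rw [← h, mul_assoc, ← Real.exp_add]
  simp

theorem stmt14 (a α t₁ : ℝ) (ha : a < 0) (hα : 0 < α)
    (hpos : 0 < 2 * a * Real.sqrt α + 1)
    (t'' : ℝ) (ht'' : t'' = t₁ - Real.log (2 * a * Real.sqrt α + 1) / (2 * a))
    (x p : ℝ → ℝ)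
    (hx : ∀ t : ℝ, HasDerivAt x (2 * a * x t + 1) t)
    (hp : ∀ t : ℝ, HasDerivAt p (-(2 * a) * p t - 1) t)
    (hx'' : x t'' = Real.sqrt α) (hp'' : p t'' = Real.sqrt α) :
    t'' < t₁ ∧ p t₁ = 0 ∧ x t₁ = 2 * a * α + 2 * Real.sqrt α := by
  have hs : 0 < Real.sqrt α := Real.sqrt_pos.mpr hα
  have hss : Real.sqrt α * Real.sqrt α = α := Real.mul_self_sqrt hα.le
  have hlog : Real.log (2 * a * Real.sqrt α + 1) < 0 :=
    Real.log_neg hpos (by nlinarith)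
  have ha0 : a ≠ 0 := ha.ne
  have hE : 2 * a * (t₁ - t'') = Real.log (2 * a * Real.sqrt α + 1) := by
    rw [ht'']; field_simp; ring
  have h1 := lin_ode_aux (2 * a) 1 x hx t'' t₁
  have h2 := lin_ode_aux (-(2 * a)) (-1) p (fun t => by simpa [sub_eq_add_neg] using hp t) t'' t₁
  rw [hE, Real.exp_log hpos, hx''] at h1
  rw [neg_mul (2 * a) (t₁ - t''), hE, Real.exp_neg, Real.exp_log hpos, hp''] at h2
  refine ⟨by nlinarith, ?_, ?_⟩
  · have h3 : (-(2 * a) * Real.sqrt α + -1) * (2 * a * Real.sqrt α + 1)⁻¹ = -1 := by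
      field_simp
      ring
    rw [h3] at h2
    have : a * p t₁ = 0 := by linarith
    exact (mul_eq_zero.mp this).resolve_left ha0
  · apply mul_left_cancel₀ ha0
    linear_combination h1 / 2 + 2 * a ^ 2 * hss
end

section
/- Let a < 0 and α > 1/(4a²) be reals. Then there exist no x > 0, p ∈ ℝ, and u ∈ [0,1] such that x·p = α, 2ax − x²u + 1 = 0, and 2xpu − 2ap − 1 − αu = 0 simultaneously hold. -/
theorem stmt16 (a α : ℝ) (ha : a < 0) (hα : 1 / (4 * a ^ 2) < α) :
    ¬ ∃ (x p u : ℝ), 0 < x ∧ u ∈ Set.Icc (0 : ℝ) 1 ∧ x * p = α ∧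
      2 * a * x - x ^ 2 * u + 1 = 0 ∧
      2 * x * p * u - 2 * a * p - 1 - α * u = 0 := by
  rintro ⟨x, p, u, hx, ⟨hu, -⟩, rfl, h1, h2⟩
  have hxp : x = p := by
    have h : x * (p - x) = 0 := by linear_combination x * p * h1 + x ^ 2 * h2
    rcases mul_eq_zero.mp h with h | h <;> linarith
  subst hxp
  have ha2 : 0 < 4 * a ^ 2 := by have := sq_pos_of_neg ha; linarith
  rw [div_lt_iff₀ ha2] at hα
  have h3 : 0 ≤ 2 * a * x + 1 := by
    have : 0 ≤ x ^ 2 * u := by positivity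
    linarith
  have h4 : 2 * a * x < 0 := by nlinarith
  nlinarith
end

section
/- Let a < 0, α > 0, t₀ < t₁, and x₀ ≥ 0 be reals, set c = √(a² + 1), and suppose x₀ ≠ a + c and k₃ = ((c − a + x₀)/(c + a − x₀))e^{−2ct₀} satisfies k₃ e^{2ct} + 1 ≠ 0 on [t₀, t₁]. Define x̂(t) = a + c − 2c/(k₃ e^{2ct} + 1) and p̄(t) = (e^{−2a(t−t₁)} − 1)/(2a). If t' ∈ (t₀, t₁) satisfies x̂(t')·p̄(t') = α, then the piecewise function x(t) equal to x̂(t) on [t₀, t'] and to the solution of ẋ = 2ax + 1 with x(t') = x̂(t') on [t', t₁], together with the control u(t) = 1 on [t₀, t') and u(t) = 0 on [t', t₁], satisfies ẋ(t) = 2a x(t) − x(t)² u(t) + 1 for all t in [t₀, t₁] except at t', with x(t₀) = x₀. -/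
theorem stmt19 (a α t₀ t₁ x₀ : ℝ) (ha : a < 0) (hα : 0 < α) (ht : t₀ < t₁)
    (hx₀ : 0 ≤ x₀)
    (c : ℝ) (hc : c = Real.sqrt (a ^ 2 + 1)) (hne : x₀ ≠ a + c)
    (k₃ : ℝ) (hk₃ : k₃ = ((c - a + x₀) / (c + a - x₀)) * Real.exp (-(2 * c) * t₀))
    (hden : ∀ t ∈ Set.Icc t₀ t₁, k₃ * Real.exp (2 * c * t) + 1 ≠ 0)
    (xhat pbar : ℝ → ℝ)
    (hxhat : xhat = fun t => a + c - 2 * c / (k₃ * Real.exp (2 * c * t) + 1))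
    (hpbar : pbar = fun t => (Real.exp (-(2 * a) * (t - t₁)) - 1) / (2 * a))
    (t' : ℝ) (ht' : t' ∈ Set.Ioo t₀ t₁) (hsw : xhat t' * pbar t' = α)
    (y : ℝ → ℝ) (hy : ∀ t : ℝ, HasDerivAt y (2 * a * y t + 1) t)
    (hy' : y t' = xhat t')
    (x u : ℝ → ℝ)
    (hx : x = fun t => if t ≤ t' then xhat t else y t)
    (hu : u = fun t => if t < t' then 1 else 0) :
    (∀ t ∈ Set.Icc t₀ t₁, t ≠ t' →
      HasDerivAt x (2 * a * x t - (x t) ^ 2 * u t + 1) t) ∧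
    x t₀ = x₀ := by
  have hc2 : c ^ 2 = a ^ 2 + 1 := by
    rw [hc]; exact Real.sq_sqrt (by positivity)
  have hc0 : 0 < c := by
    rw [hc]; exact Real.sqrt_pos.mpr (by positivity)
  obtain ⟨h1, h2⟩ := ht'
  constructor
  · intro t htI hne'
    rcases lt_or_gt_of_ne hne' with hlt | hgt
    · have hxt : x t = xhat t := by simp [hx, hlt.le]
      have hut : u t = 1 := by simp [hu, hlt]
      have hev : x =ᶠ[nhds t] xhat := by
        filter_upwards [Iio_mem_nhds hlt] with s hs
        have hs' : s < t' := hs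
        simp [hx, hs'.le]
      rw [hxt, hut]
      refine HasDerivAt.congr_of_eventuallyEq ?_ hev
      have hD := hden t htI
      have e1 : HasDerivAt (fun s : ℝ => 2 * c * s) (2 * c) t := by
        simpa using (hasDerivAt_id t).const_mul (2 * c)
      have e2 := ((e1.exp.const_mul k₃).add_const 1)
      have e3 := ((hasDerivAt_const t (2 * c)).fun_div e2 hD).const_sub (a + c)
      rw [hxhat]
      convert e3 using 1
      simp only
      generalize Real.exp (2 * c * t) = E at hD ⊢
      have ha2 : a ^ 2 = c ^ 2 - 1 := by linarith
      field_simp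
      ring_nf
      simp only [ha2]
      ring
    · have hxt : x t = y t := by simp [hx, hgt]
      have hut : u t = 0 := by simp [hu, hgt.le]
      have hev : x =ᶠ[nhds t] y := by
        filter_upwards [Ioi_mem_nhds hgt] with s hs
        have hs' : t' < s := hs
        simp [hx, hs']
      rw [hxt, hut]
      refine HasDerivAt.congr_of_eventuallyEq ?_ hev
      simpa using hy t
  · have hd : c + a - x₀ ≠ 0 := fun h => hne (by linarith)
    have hE : Real.exp (-(2 * c) * t₀) * Real.exp (2 * c * t₀) = 1 := by
      rw [← Real.exp_add]; simp
    have hK : k₃ * Real.exp (2 * c * t₀) + 1 = 2 * c / (c + a - x₀) := by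
      rw [hk₃, mul_assoc, hE]
      field_simp
      ring
    have hxt : x t₀ = xhat t₀ := by simp [hx, h1.le]
    rw [hxt, hxhat]
    simp only
    rw [hK]
    field_simp
    ring
end
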